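/- Let 1 ≤ p < q ≤ m with q − p > 1, let D be a regular domain that is a (p, q)-hybrid* domain, and let D̄ = {P ∈ D : r_1(P) ∈ M}. If φ : D^n → Δ(A) is a unanimous and strategy-proof RSCF, then Σ_{a_k ∈ M} φ_{a_k}(P) = 1 for every profile P ∈ D̄^n. -/

import Mathlib

open Finset

noncomputable section

/-- A preference is a linear order over the `m` alternatives, represented as a bijection
from rank positions (0-based: position `0` is the top) to alternatives. -/
abbrev Pref (m : ℕ) := Fin m ≃ Fin m

namespace PFBRPaper

variable {m n : ℕ}

/-- `a` is strictly preferred to `b` under `P`. -/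
def Prefers (P : Pref m) (a b : Fin m) : Prop := P.symm a < P.symm b

/-- The last alternative `a_m` (0-based index `m-1`). -/
def lastAlt (m : ℕ) [NeZero m] : Fin m :=
  ⟨m - 1, Nat.sub_lt (Nat.pos_of_ne_zero (NeZero.ne m)) Nat.one_pos⟩

/-- Every alternative is top-ranked by some preference in the domain. -/
def MinimallyRich [NeZero m] (D : Set (Pref m)) : Prop :=
  ∀ a : Fin m, ∃ P ∈ D, P 0 = a

/-- The preference ranking `a_m` first, ..., `a_1` last. -/
def revPref (m : ℕ) : Pref m :=
  ⟨Fin.rev, Fin.rev, fun i => Fin.rev_rev i, fun i => Fin.rev_rev i⟩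

/-- Diversity, with the labeling convention: the domain contains the preference ranking
`a_1` first, `a_2` second, ..., `a_m` last (the identity), together with its
complete reversal. -/
def Diversity (D : Set (Pref m)) : Prop :=
  Equiv.refl (Fin m) ∈ D ∧ revPref m ∈ D

/-- Two preferences are adjacent: the alternatives at two contiguous rank positions are
swapped and everything else is unchanged. -/
def Adjacent (P P' : Pref m) : Prop :=
  P ≠ P' ∧ ∃ k : ℕ, ∃ hk : k + 1 < m,
    P ⟨k, Nat.lt_of_succ_lt hk⟩ = P' ⟨k + 1, hk⟩ ∧
    P ⟨k + 1, hk⟩ = P' ⟨k, Nat.lt_of_succ_lt hk⟩ ∧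
    ∀ l : Fin m, (l : ℕ) ≠ k → (l : ℕ) ≠ k + 1 → P l = P' l

/-- `π 0, …, π (v-1)` is a path in `D` connecting `P` and `P'`. -/
def IsPath (D : Set (Pref m)) (P P' : Pref m) (π : ℕ → Pref m) (v : ℕ) : Prop :=
  1 ≤ v ∧ (∀ i < v, π i ∈ D) ∧
  (∀ i < v, ∀ j < v, π i = π j → i = j) ∧
  π 0 = P ∧ π (v - 1) = P' ∧
  ∀ i, i + 1 < v → Adjacent (π i) (π (i + 1))

/-- The path `π 0, …, π (v-1)` has no `{a,b}`-restoration: the relative ranking of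
`a` and `b` switches at most once along the path. -/
def NoRestoration (π : ℕ → Pref m) (v : ℕ) (a b : Fin m) : Prop :=
  ∀ i j k : ℕ, i < j → j < k → k < v →
    ¬(Prefers (π i) a b ∧ Prefers (π j) b a ∧ Prefers (π k) a b) ∧
    ¬(Prefers (π i) b a ∧ Prefers (π j) a b ∧ Prefers (π k) b a)

def NoRestorationDomain (D : Set (Pref m)) : Prop :=
  ∀ P ∈ D, ∀ P' ∈ D, P ≠ P' → ∀ a b : Fin m,
    ∃ π v, IsPath D P P' π v ∧ NoRestoration π v a b

def RegularDomain [NeZero m] (D : Set (Pref m)) : Prop :=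
  MinimallyRich D ∧ Diversity D ∧ NoRestorationDomain D

/-- `a ≈ b`: the two alternatives are strongly connected in the domain `D`. -/
def StronglyConnected [NeZero m] (D : Set (Pref m)) (a b : Fin m) : Prop :=
  a ≠ b ∧ ∃ P ∈ D, ∃ P' ∈ D,
    P 0 = a ∧ P 1 = b ∧ P' 0 = b ∧ P' 1 = a ∧
    ∀ k : Fin m, 2 ≤ (k : ℕ) → P k = P' k

/-- `l` is a vertex-path of the graph `G_≈^B(D)`. -/
def IsVertexPathOn [NeZero m] (D : Set (Pref m)) (B : Set (Fin m)) (l : List (Fin m)) : Prop :=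
  l ≠ [] ∧ l.Nodup ∧ (∀ x ∈ l, x ∈ B) ∧ l.Chain' (StronglyConnected D)

/-- `l` is a vertex-path of `G_≈^B(D)` connecting `a` and `b`. -/
def VertexPathBetween [NeZero m] (D : Set (Pref m)) (B : Set (Fin m)) (a b : Fin m)
    (l : List (Fin m)) : Prop :=
  IsVertexPathOn D B l ∧ l.head? = some a ∧ l.getLast? = some b

/-- `a` is a leaf of the subgraph `G_≈^B(D)`. -/
def IsLeaf [NeZero m] (D : Set (Pref m)) (B : Set (Fin m)) (a : Fin m) : Prop :=
  a ∈ B ∧ ∃! b : Fin m, b ∈ B ∧ StronglyConnected D a b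

/-- Single-peakedness w.r.t. the natural order. -/
def SinglePeaked [NeZero m] (P : Pref m) : Prop :=
  ∀ a b : Fin m, ((a < b ∧ b < P 0) ∨ (P 0 < b ∧ b < a)) → Prefers P b a

/-- A `(p,q)`-hybrid preference (thresholds `p < q`, 0-based). -/
def IsHybridPref [NeZero m] (p q : Fin m) (P : Pref m) : Prop :=
  (∀ r s : Fin m, ((r ≤ p ∧ s ≤ p) ∨ (q ≤ r ∧ q ≤ s)) →
      ((r < s ∧ s < P 0) ∨ (P 0 < s ∧ s < r)) → Prefers P s r) ∧
  (P 0 ≤ p → ∀ l : Fin m, p ≤ l → l ≤ q → l ≠ p → Prefers P p l) ∧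
  (q ≤ P 0 → ∀ l : Fin m, p ≤ l → l ≤ q → l ≠ q → Prefers P q l)

/-- The `(p,q)`-hybrid domain of all `(p,q)`-hybrid preferences. -/
def hybridDomain [NeZero m] (p q : Fin m) : Set (Pref m) := {P | IsHybridPref p q P}

/-- `D` is a `(p,q)`-hybrid* domain. -/
def IsHybridStar [NeZero m] (D : Set (Pref m)) (p q : Fin m) : Prop :=
  D ⊆ hybridDomain p q ∧
  (∀ k : Fin m, k ≠ 0 → k ≠ lastAlt m →
      ∃ l, VertexPathBetween D Set.univ 0 (lastAlt m) l ∧ k ∈ l) ∧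
  ((p : ℕ) + 1 < (q : ℕ) → ∀ a : Fin m, ¬ IsLeaf D (Set.Icc p q) a)

/-- A lottery over the alternatives. -/
def Lottery (m : ℕ) : Type :=
  {f : Fin m → ℝ // (∀ a, 0 ≤ f a) ∧ ∑ a, f a = 1}

/-- The probability that a lottery assigns to a set of alternatives. -/
def Lottery.prob (lam : Lottery m) (B : Finset (Fin m)) : ℝ := ∑ a ∈ B, lam.1 a

/-- The support of a lottery. -/
def Lottery.supp (lam : Lottery m) : Finset (Fin m) :=
  Finset.univ.filter (fun a => 0 < lam.1 a)

/-- The degenerate lottery on `a`. -/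
def degLottery (a : Fin m) : Lottery m :=
  ⟨fun b => if b = a then 1 else 0,
   fun b => by by_cases h : b = a <;> simp [h],
   by simp⟩

/-- A profile of preferences drawn from the domain `D`. -/
abbrev Profile (D : Set (Pref m)) (n : ℕ) := Fin n → D

/-- The top-ranked alternative of a preference in the domain. -/
def topOf [NeZero m] {D : Set (Pref m)} (P : D) : Fin m := P.1 0

def Unanimous [NeZero m] {D : Set (Pref m)} (φ : Profile D n → Lottery m) : Prop :=
  ∀ (P : Profile D n) (a : Fin m), (∀ i, topOf (P i) = a) → φ P = degLottery a

/-- The total probability of the `k` top-ranked alternatives of `P` under `lam`. -/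
def topSum (lam : Lottery m) (P : Pref m) (k : ℕ) : ℝ :=
  ∑ t ∈ Finset.univ.filter (fun t : Fin m => (t : ℕ) < k), lam.1 (P t)

/-- Strategy-proofness: truth-telling first-order stochastically dominates any unilateral
misrepresentation. -/
def StrategyProof {D : Set (Pref m)} (φ : Profile D n → Lottery m) : Prop :=
  ∀ (i : Fin n) (P : Profile D n) (Pi' : D) (k : ℕ), k ≤ m →
    topSum (φ (Function.update P i Pi')) (P i).1 k ≤ topSum (φ P) (P i).1 k

def TopsOnly [NeZero m] {D : Set (Pref m)} (φ : Profile D n → Lottery m) : Prop :=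
  ∀ P P' : Profile D n, (∀ i, topOf (P i) = topOf (P' i)) → φ P = φ P'

def Anonymous {D : Set (Pref m)} (φ : Profile D n → Lottery m) : Prop :=
  ∀ (P : Profile D n) (σ : Equiv.Perm (Fin n)), φ (P ∘ σ) = φ P

/-- The interval `[a_k, a_m]`. -/
def upSet (k : Fin m) : Finset (Fin m) := Finset.univ.filter (fun a => k ≤ a)

/-- The interval `[a_1, a_k]`. -/
def downSet (k : Fin m) : Finset (Fin m) := Finset.univ.filter (fun a => a ≤ k)

/-- The interval `[a_p, a_q]`. -/
def midSet (p q : Fin m) : Finset (Fin m) := Finset.univ.filter (fun a => p ≤ a ∧ a ≤ q)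

/-- `S(k,P)`: the voters whose preference top is not to the left of `a_k`. -/
def voterSet [NeZero m] {D : Set (Pref m)} (P : Profile D n) (k : Fin m) : Finset (Fin n) :=
  Finset.univ.filter (fun i => k ≤ topOf (P i))

/-- `β_{S(k,P)}([a_k, a_m])`, with the convention that it is `0` for `k = m`. -/
def tailProb [NeZero m] {D : Set (Pref m)} (β : Finset (Fin n) → Lottery m)
    (P : Profile D n) (k : ℕ) : ℝ :=
  if h : k < m then (β (voterSet P ⟨k, h⟩)).prob (upSet ⟨k, h⟩) else 0

def BallotUnanimity [NeZero m] (β : Finset (Fin n) → Lottery m) : Prop :=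
  β Finset.univ = degLottery (lastAlt m) ∧ β ∅ = degLottery 0

def BallotMonotone (β : Finset (Fin n) → Lottery m) : Prop :=
  ∀ S T : Finset (Fin n), S ⊂ T →
    ∀ k : Fin m, (β S).prob (upSet k) ≤ (β T).prob (upSet k)

/-- `φ` is a probabilistic fixed ballot rule with probabilistic ballots `β`. -/
def IsPFBRWith [NeZero m] {D : Set (Pref m)} (φ : Profile D n → Lottery m)
    (β : Finset (Fin n) → Lottery m) : Prop :=
  BallotUnanimity β ∧ BallotMonotone β ∧
  ∀ (P : Profile D n) (k : Fin m),
    (φ P).1 k = tailProb β P (k : ℕ) - tailProb β P ((k : ℕ) + 1)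

def IsPFBR [NeZero m] {D : Set (Pref m)} (φ : Profile D n → Lottery m) : Prop :=
  ∃ β, IsPFBRWith φ β

/-- The constrained random-dictatorship condition w.r.t. `a_p` and `a_q`. -/
def ConstrainedRD (p q : Fin m) (β : Finset (Fin n) → Lottery m) : Prop :=
  ∃ ε : Fin n → ℝ, (∀ i, 0 ≤ ε i) ∧ ∑ i, ε i = 1 ∧
    ∀ S : Finset (Fin n),
      (β S).prob (upSet q) = ∑ i ∈ S, ε i ∧
      (β S).prob (downSet p) = ∑ i ∈ Sᶜ, ε i

/-- The constrained random-dictatorship condition w.r.t. `a_p` and `a_q` with every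
conditional dictatorial coefficient equal to `1/n`. -/
def ConstrainedRDUniform (p q : Fin m) (β : Finset (Fin n) → Lottery m) : Prop :=
  ∀ S : Finset (Fin n),
    (β S).prob (upSet q) = (S.card : ℝ) / (n : ℝ) ∧
    (β S).prob (downSet p) = ((Sᶜ : Finset (Fin n)).card : ℝ) / (n : ℝ)

/-- Anonymity at the level of probabilistic ballots. -/
def BallotAnonymous (β : Finset (Fin n) → Lottery m) : Prop :=
  ∀ S S' : Finset (Fin n), S.Nonempty → S'.Nonempty → S.card = S'.card → β S = β S'

/-- Per-capita monotonicity w.r.t. `a_p` and `a_q`. -/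
def PerCapitaMonotone (p q : Fin m) (β : Finset (Fin n) → Lottery m) : Prop :=
  ∀ S S' : Finset (Fin n), S.Nonempty → S ⊂ S' → S' ⊂ Finset.univ →
    (∀ t : Fin m, q ≤ t →
      (β S).prob (upSet t) / (S.card : ℝ) ≤ (β S').prob (upSet t) / (S'.card : ℝ)) ∧
    (∀ s : Fin m, s ≤ p →
      (β Sᶜ).prob (downSet s) / (S.card : ℝ) ≤ (β S'ᶜ).prob (downSet s) / (S'.card : ℝ))

/-- Decomposability: `φ` is a mixture of finitely many unanimous and strategy-proof
deterministic social choice functions. -/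
def Decomposable [NeZero m] {D : Set (Pref m)} (φ : Profile D n → Lottery m) : Prop :=
  ∃ (r : ℕ) (f : Fin r → (Profile D n → Fin m)) (α : Fin r → ℝ),
    (∀ k, 0 < α k) ∧ ∑ k, α k = 1 ∧
    (∀ k, Unanimous (fun P => degLottery (f k P)) ∧
          StrategyProof (fun P => degLottery (f k P))) ∧
    ∀ (P : Profile D n) (a : Fin m),
      (φ P).1 a = ∑ k, α k * (if f k P = a then 1 else 0)

/-- `b̂_S^R`: the `≺`-minimum of `supp(β_S) ∩ R` (with the convention `b̂_N^R = a_m`). -/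
def bR [NeZero m] (β : Finset (Fin n) → Lottery m) (q : Fin m) (S : Finset (Fin n)) : Fin m :=
  if h : ((β S).supp ∩ upSet q).Nonempty then ((β S).supp ∩ upSet q).min' h else lastAlt m

/-- `b̂_S^L`: the `≺`-maximum of `supp(β_S) ∩ L` (with the convention `b̂_∅^L = a_1`). -/
def bL [NeZero m] (β : Finset (Fin n) → Lottery m) (p : Fin m) (S : Finset (Fin n)) : Fin m :=
  if h : ((β S).supp ∩ downSet p).Nonempty then ((β S).supp ∩ downSet p).max' h else 0

/-- `α = min over nonempty S ⊂ N of min(β_S(b̂_S^R)/|S|, β_S(b̂_S^L)/(n-|S|))`. -/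
def alphaVal [NeZero m] (β : Finset (Fin n) → Lottery m) (p q : Fin m) : ℝ :=
  sInf {x : ℝ | ∃ S : Finset (Fin n), S.Nonempty ∧ S ≠ Finset.univ ∧
    x = min ((β S).1 (bR β q S) / (S.card : ℝ))
            ((β S).1 (bL β p S) / ((n : ℝ) - (S.card : ℝ)))}

/-- `γ_S = (|S|/n) e_{b̂_S^R} + ((n-|S|)/n) e_{b̂_S^L}`, pointwise. -/
def gammaFun [NeZero m] (β : Finset (Fin n) → Lottery m) (p q : Fin m)
    (S : Finset (Fin n)) (a : Fin m) : ℝ :=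
  ((S.card : ℝ) / (n : ℝ)) * (if a = bR β q S then 1 else 0)
  + (((n : ℝ) - (S.card : ℝ)) / (n : ℝ)) * (if a = bL β p S then 1 else 0)

/-- The max-min formula `f(P) = max_{S ⊆ N} min({r_1(P_j) : j ∈ S} ∪ {b_S})`. -/
def fbrOutcome [NeZero m] {D : Set (Pref m)} (b : Finset (Fin n) → Fin m)
    (P : Profile D n) : Fin m :=
  Finset.univ.sup' Finset.univ_nonempty
    (fun S : Finset (Fin n) =>
      (insert (b S) (S.image (fun j => topOf (P j)))).inf' (Finset.insert_nonempty _ _) id)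

/-- `f` is a `(p,q)`-fixed ballot rule with deterministic ballots `b` and constrained
dictator `i`. -/
def IsFBRWith [NeZero m] {D : Set (Pref m)} (p q : Fin m) (f : Profile D n → Fin m)
    (b : Finset (Fin n) → Fin m) (i : Fin n) : Prop :=
  b Finset.univ = lastAlt m ∧ b ∅ = 0 ∧
  (∀ S T : Finset (Fin n), S ⊂ T → b S ≤ b T) ∧
  (∀ S : Finset (Fin n), (i ∈ S → q ≤ b S) ∧ (i ∉ S → b S ≤ p)) ∧
  ∀ P : Profile D n, f P = fbrOutcome b P

end PFBRPaper

open PFBRPaper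

/-!
If two preferences of voter `i` have the same strict upper contour set at `z`, strategy-proofness
in both directions forces `φ_z` to be unaffected when `i` switches between them. An adjacent switch
therefore only moves probability between the two interchanged alternatives `a` and `b`. When such a
switch keeps the top of `i`, the amount moved depends on the other voters only through their
rankings of `a` against `b`: it survives any adjacent switch that respects this ranking, and the
no-restoration property links preferences agreeing on `{a, b}` by such switches. The other voters
may thus be given the top of `i`, and unanimity shows that nothing is moved at all.

Now let all tops lie in a set `S` such that the preferences of `D` with top in `S` are those
ranking `u` above `v`. The no-restoration property joins the voters' preferences to a common one
while keeping all tops in `S`, so that no alternative outside `S` ever changes its probability, and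
by unanimity this probability is zero. In a hybrid domain `S = [a_p, a_m]` is singled out by
`a_p` against `a_{p-1}`, and `S = [a_1, a_q]` by `a_q` against `a_{q+1}`.
-/

namespace PFBRPaper

variable {m n : ℕ}

section Prefers

variable {P : Pref m} {a b : Fin m}

lemma Prefers.asymm (h : Prefers P a b) : ¬ Prefers P b a :=
  lt_asymm h

lemma Prefers.ne (h : Prefers P a b) : a ≠ b := by
  rintro rfl
  exact h.asymm h

lemma prefers_or_prefers (P : Pref m) (hab : a ≠ b) : Prefers P a b ∨ Prefers P b a :=
  lt_or_gt_of_ne (P.symm.injective.ne hab)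

lemma not_prefers_iff (hab : a ≠ b) : ¬ Prefers P a b ↔ Prefers P b a :=
  ⟨(prefers_or_prefers P hab).resolve_left, Prefers.asymm⟩

lemma prefers_top [NeZero m] (h : a ≠ P 0) : Prefers P (P 0) a := by
  rw [Prefers, Equiv.symm_apply_apply, Fin.pos_iff_ne_zero, Ne, Equiv.symm_apply_eq]
  exact h

end Prefers

section Flips

/-- `P'` arises from `P` by interchanging the neighbours `a` and `b`, with `a` above `b` in `P`.
This is encoded by relative rankings instead of positions: `P` and `P'` rank `a` and `b` oppositely
and have the same strict upper contour set at every other alternative. -/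
structure Flips (P P' : Pref m) (a b : Fin m) : Prop where
  left : Prefers P a b
  right : Prefers P' b a
  prefers_iff : ∀ x z, z ≠ a → z ≠ b → (Prefers P x z ↔ Prefers P' x z)

variable {P P' : Pref m}

lemma Adjacent.exists_flips (h : Adjacent P P') : ∃ a b, Flips P P' a b := by
  obtain ⟨-, k, hk, hab, hba, hrest⟩ := h
  have symm_k : P'.symm (P ⟨k, Nat.lt_of_succ_lt hk⟩) = ⟨k + 1, hk⟩ := by
    rw [hab, Equiv.symm_apply_apply]
  have symm_succ : P'.symm (P ⟨k + 1, hk⟩) = ⟨k, Nat.lt_of_succ_lt hk⟩ := by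
    rw [hba, Equiv.symm_apply_apply]
  have symm_other (t : Fin m) (h₀ : (t : ℕ) ≠ k) (h₁ : (t : ℕ) ≠ k + 1) : P'.symm (P t) = t := by
    rw [hrest t h₀ h₁, Equiv.symm_apply_apply]
  refine ⟨P ⟨k, Nat.lt_of_succ_lt hk⟩, P ⟨k + 1, hk⟩, ?_, ?_, fun x z hza hzb => ?_⟩
  · simp [Prefers]
  · simp [Prefers, symm_k, symm_succ]
  obtain ⟨t, rfl⟩ := P.surjective x
  obtain ⟨s, rfl⟩ := P.surjective z
  have hs₀ : (s : ℕ) ≠ k := fun h => hza (congrArg P (Fin.ext h))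
  have hs₁ : (s : ℕ) ≠ k + 1 := fun h => hzb (congrArg P (Fin.ext h))
  simp only [Prefers, Equiv.symm_apply_apply, symm_other s hs₀ hs₁]
  by_cases ht₀ : (t : ℕ) = k
  · obtain rfl : t = ⟨k, Nat.lt_of_succ_lt hk⟩ := Fin.ext ht₀
    simp only [symm_k, Fin.lt_def]
    lia
  by_cases ht₁ : (t : ℕ) = k + 1
  · obtain rfl : t = ⟨k + 1, hk⟩ := Fin.ext ht₁
    simp only [symm_succ, Fin.lt_def]
    lia
  rw [symm_other t ht₀ ht₁]

variable {a b x y : Fin m}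

lemma Flips.eq_and_eq (h : Flips P P' a b) (hP : Prefers P x y) (hP' : Prefers P' y x) :
    x = a ∧ y = b := by
  have hx : x = a ∨ x = b := by
    by_contra! hx
    exact hP.asymm ((h.prefers_iff y x hx.1 hx.2).2 hP')
  have hy : y = a ∨ y = b := by
    by_contra! hy
    exact hP'.asymm ((h.prefers_iff x y hy.1 hy.2).1 hP)
  rcases hx with rfl | rfl <;> rcases hy with rfl | rfl
  · exact absurd rfl hP.ne
  · exact ⟨rfl, rfl⟩
  · exact absurd h.left hP.asymm
  · exact absurd rfl hP.ne

lemma Flips.eq_top_and_eq_top [NeZero m] (h : Flips P P' a b) (htop : P 0 ≠ P' 0) :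
    a = P 0 ∧ b = P' 0 :=
  (h.eq_and_eq (prefers_top htop.symm) (prefers_top htop)).imp Eq.symm Eq.symm

lemma Flips.ne_or_ne (h : Flips P P' a b) (hxy : x ≠ y)
    (hiff : Prefers P x y ↔ Prefers P' x y) : (x ≠ a ∧ x ≠ b) ∨ (y ≠ a ∧ y ≠ b) := by
  by_contra! hcon
  have hx : x = a ∨ x = b := or_iff_not_imp_left.2 hcon.1
  have hy : y = a ∨ y = b := or_iff_not_imp_left.2 hcon.2
  rcases hx with rfl | rfl <;> rcases hy with rfl | rfl
  · exact hxy rfl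
  · exact h.right.asymm (hiff.1 h.left)
  · exact h.left.asymm (hiff.2 h.right)
  · exact hxy rfl

end Flips

section NoRestoration

variable {D : Set (Pref m)} {u v : Fin m}

lemma NoRestorationDomain.exists_path_forall_prefers (hD : NoRestorationDomain D)
    {R R' : Pref m} (hRD : R ∈ D) (hRD' : R' ∈ D) (hR : Prefers R u v) (hR' : Prefers R' u v) :
    ∃ π w, IsPath D R R' π w ∧ ∀ j < w, Prefers (π j) u v := by
  rcases eq_or_ne R R' with rfl | hne
  · exact ⟨fun _ => R, 1, ⟨le_rfl, fun _ _ => hRD, by lia, rfl, rfl, by lia⟩, fun _ _ => hR⟩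
  obtain ⟨π, w, hπ, hno⟩ := hD R hRD R' hRD' hne u v
  refine ⟨π, w, hπ, fun j hj => ?_⟩
  obtain ⟨-, -, -, rfl, rfl, -⟩ := hπ
  by_contra hnot
  have hswitched : Prefers (π j) v u := (not_prefers_iff hR.ne).1 hnot
  have hfirst : j ≠ 0 := by
    rintro rfl
    exact hnot hR
  have hlast : j ≠ w - 1 := by
    rintro rfl
    exact hnot hR'
  exact (hno 0 j (w - 1) (by lia) (by lia) (by lia)).1 ⟨hR, hswitched, hR'⟩

variable {β : Type*}

lemma NoRestorationDomain.eq_of_forall_adjacent_of_prefers (hD : NoRestorationDomain D) {g : D → β}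
    (hg : ∀ R R' : D, Adjacent R.1 R'.1 → Prefers R.1 u v → Prefers R'.1 u v → g R = g R')
    {R R' : D} (hR : Prefers R.1 u v) (hR' : Prefers R'.1 u v) : g R = g R' := by
  obtain ⟨π, w, ⟨hw, hmem, -, hfirst, hlast, hadj⟩, hpref⟩ :=
    hD.exists_path_forall_prefers R.2 R'.2 hR hR'
  have hconst : ∀ j (hj : j < w), g R = g ⟨π j, hmem j hj⟩ := by
    intro j hj
    induction j with
    | zero => exact congrArg g (Subtype.ext hfirst.symm)
    | succ j ih =>
      exact (ih (by lia)).trans (hg _ _ (hadj j hj) (hpref j (by lia)) (hpref (j + 1) hj))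
  exact (hconst (w - 1) (by lia)).trans (congrArg g (Subtype.ext hlast))

lemma NoRestorationDomain.eq_of_forall_adjacent_of_prefers_iff (hD : NoRestorationDomain D)
    (huv : u ≠ v) {g : D → β}
    (hg : ∀ R R' : D, Adjacent R.1 R'.1 → (Prefers R.1 u v ↔ Prefers R'.1 u v) → g R = g R')
    {R R' : D} (hiff : Prefers R.1 u v ↔ Prefers R'.1 u v) : g R = g R' := by
  by_cases hR : Prefers R.1 u v
  · exact hD.eq_of_forall_adjacent_of_prefers
      (fun R R' hadj h h' => hg R R' hadj (iff_of_true h h')) hR (hiff.1 hR)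
  · exact hD.eq_of_forall_adjacent_of_prefers
      (fun R R' hadj h h' => hg R R' hadj (iff_of_false h.asymm h'.asymm))
      ((not_prefers_iff huv).1 hR) ((not_prefers_iff huv).1 (hiff.not.1 hR))

end NoRestoration

lemma eq_of_forall_update_eq {ι β : Type*} [Finite ι] [DecidableEq ι] {α : ι → Type*}
    (G : (∀ i, α i) → β) (f g : ∀ i, α i)
    (h : ∀ x i, G (Function.update x i (f i)) = G (Function.update x i (g i))) : G f = G g := by
  cases nonempty_fintype ι
  have hpiecewise : ∀ s : Finset ι, G f = G (s.piecewise g f) := by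
    intro s
    induction s using Finset.induction_on with
    | empty => rw [Finset.piecewise_empty]
    | insert i s hi ih =>
      rw [ih, Finset.piecewise_insert, ← h, ← Finset.piecewise_eq_of_notMem s g f hi,
        Function.update_eq_self]
  simpa using hpiecewise Finset.univ

lemma Lottery.prob_eq_one_of_forall_notMem (lam : Lottery m) {B : Finset (Fin m)}
    (h : ∀ a ∉ B, lam.1 a = 0) : lam.prob B = 1 :=
  (Finset.sum_subset (Finset.subset_univ B) fun a _ => h a).trans lam.2.2

section TopSum

lemma topSum_symm_add_one (lam : Lottery m) (P : Pref m) (z : Fin m) :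
    topSum lam P (P.symm z + 1) = topSum lam P (P.symm z) + lam.1 z := by
  have hinsert : Finset.univ.filter (fun t : Fin m => (t : ℕ) < P.symm z + 1)
      = insert (P.symm z) (Finset.univ.filter fun t : Fin m => (t : ℕ) < P.symm z) := by
    ext t
    simp only [Finset.mem_filter, Finset.mem_univ, true_and, Finset.mem_insert, Fin.ext_iff]
    lia
  rw [topSum, hinsert, Finset.sum_insert (by simp), Equiv.apply_symm_apply, add_comm, topSum]

lemma topSum_symm_congr (lam : Lottery m) {P P' : Pref m} {z : Fin m}
    (h : ∀ x, Prefers P x z ↔ Prefers P' x z) :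
    topSum lam P (P.symm z) = topSum lam P' (P'.symm z) := by
  refine Finset.sum_equiv (P.trans P'.symm) (fun t => ?_) (fun t _ => by simp)
  simpa [Prefers] using h (P t)

end TopSum

section StrategyProof

variable {D : Set (Pref m)} {φ : Profile D n → Lottery m}

lemma StrategyProof.topSum_update_le (hsp : StrategyProof φ) (T : Profile D n) (i : Fin n)
    (R R' : D) {k : ℕ} (hk : k ≤ m) :
    topSum (φ (Function.update T i R')) R.1 k ≤ topSum (φ (Function.update T i R)) R.1 k := by
  simpa using hsp i (Function.update T i R) R' k hk

lemma StrategyProof.apply_update_eq_of_prefers_iff (hsp : StrategyProof φ) (T : Profile D n)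
    (i : Fin n) {R R' : D} {z : Fin m} (h : ∀ x, Prefers R.1 x z ↔ Prefers R'.1 x z) :
    (φ (Function.update T i R)).1 z = (φ (Function.update T i R')).1 z := by
  have hstrict := hsp.topSum_update_le T i R R' (R.1.symm z).2.le
  have hstrict' := hsp.topSum_update_le T i R' R (R'.1.symm z).2.le
  have hweak := hsp.topSum_update_le T i R R' (R.1.symm z).2
  have hweak' := hsp.topSum_update_le T i R' R (R'.1.symm z).2
  simp only [Nat.succ_eq_add_one, topSum_symm_add_one] at hweak hweak'
  simp only [topSum_symm_congr _ h] at hstrict hweak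
  linarith

end StrategyProof

section Transfer

variable {D : Set (Pref m)}

/-- The probability that `z` gains when voter `i` reports `Q` instead of `Q'`, the other voters
reporting as in `T`. The report of `i` in `T` is irrelevant. -/
def transfer (φ : Profile D n → Lottery m) (i : Fin n) (Q Q' : D) (z : Fin m)
    (T : Profile D n) : ℝ :=
  (φ (Function.update T i Q)).1 z - (φ (Function.update T i Q')).1 z

variable {φ : Profile D n → Lottery m} {i : Fin n} {Q Q' : D} {a b : Fin m}

lemma StrategyProof.transfer_eq_zero_of_ne (hsp : StrategyProof φ) (hQ : Flips Q.1 Q'.1 a b)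
    {z : Fin m} (hza : z ≠ a) (hzb : z ≠ b) (T : Profile D n) : transfer φ i Q Q' z T = 0 :=
  sub_eq_zero.2 (hsp.apply_update_eq_of_prefers_iff T i fun x => hQ.prefers_iff x z hza hzb)

lemma StrategyProof.transfer_add_transfer (hsp : StrategyProof φ) (hQ : Flips Q.1 Q'.1 a b)
    (T : Profile D n) : transfer φ i Q Q' a T + transfer φ i Q Q' b T = 0 := by
  have hsum : ∑ z, transfer φ i Q Q' z T = 0 := by
    simp only [transfer, Finset.sum_sub_distrib]
    rw [(φ _).2.2, (φ _).2.2, sub_self]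
  rw [← hsum, ← Finset.sum_pair (f := fun z => transfer φ i Q Q' z T) hQ.left.ne]
  refine Finset.sum_subset (Finset.subset_univ _) fun z _ hz => ?_
  simp only [Finset.mem_insert, Finset.mem_singleton, not_or] at hz
  exact hsp.transfer_eq_zero_of_ne hQ hz.1 hz.2 T

lemma StrategyProof.transfer_update_eq_of_prefers_iff (hsp : StrategyProof φ) (T : Profile D n)
    (j : Fin n) {R R' : D} {z : Fin m} (h : ∀ x, Prefers R.1 x z ↔ Prefers R'.1 x z) :
    transfer φ i Q Q' z (Function.update T j R) = transfer φ i Q Q' z (Function.update T j R') := by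
  rcases eq_or_ne j i with rfl | hji
  · simp only [transfer, Function.update_idem]
  · simp only [transfer, Function.update_comm hji]
    rw [hsp.apply_update_eq_of_prefers_iff _ j h, hsp.apply_update_eq_of_prefers_iff _ j h]

lemma StrategyProof.transfer_update_eq_of_adjacent (hsp : StrategyProof φ)
    (hQ : Flips Q.1 Q'.1 a b) (T : Profile D n) (j : Fin n) {R R' : D}
    (hadj : Adjacent R.1 R'.1) (hiff : Prefers R.1 a b ↔ Prefers R'.1 a b) :
    transfer φ i Q Q' a (Function.update T j R) = transfer φ i Q Q' a (Function.update T j R') := by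
  obtain ⟨c, d, hR⟩ := hadj.exists_flips
  rcases hR.ne_or_ne hQ.left.ne hiff with ⟨hac, had⟩ | ⟨hbc, hbd⟩
  · exact hsp.transfer_update_eq_of_prefers_iff T j fun x => hR.prefers_iff x a hac had
  · have hb : transfer φ i Q Q' b (Function.update T j R) =
        transfer φ i Q Q' b (Function.update T j R') :=
      hsp.transfer_update_eq_of_prefers_iff T j fun x => hR.prefers_iff x b hbc hbd
    have hsum := hsp.transfer_add_transfer (i := i) hQ (Function.update T j R)
    have hsum' := hsp.transfer_add_transfer (i := i) hQ (Function.update T j R')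
    linarith

variable [NeZero m]

lemma Unanimous.apply_update (hu : Unanimous φ) {T : Profile D n} {c : Fin m}
    (hT : ∀ j, topOf (T j) = c) (hQ : topOf Q = c) : φ (Function.update T i Q) = degLottery c :=
  hu _ c fun j => by
    rcases eq_or_ne j i with rfl | hji
    · rwa [Function.update_self]
    · rw [Function.update_of_ne hji, hT j]

lemma StrategyProof.transfer_eq_zero_of_top_eq (hsp : StrategyProof φ) (hu : Unanimous φ)
    (hD : NoRestorationDomain D) (hQ : Flips Q.1 Q'.1 a b) (htop : topOf Q = topOf Q')
    (T : Profile D n) : transfer φ i Q Q' a T = 0 := by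
  classical
  let T' : Profile D n := fun j => if Prefers (T j).1 a b then Q else Q'
  have hiff (j : Fin n) : Prefers (T j).1 a b ↔ Prefers (T' j).1 a b := by
    by_cases h : Prefers (T j).1 a b
    · simp only [T', if_pos h, h, hQ.left]
    · simp only [T', if_neg h, h, hQ.right.asymm]
  have htop' (j : Fin n) : topOf (T' j) = topOf Q := by
    by_cases h : Prefers (T j).1 a b
    · simp only [T', if_pos h]
    · simp only [T', if_neg h, htop]
  have hTT' : transfer φ i Q Q' a T = transfer φ i Q Q' a T' :=
    eq_of_forall_update_eq _ T T' fun X j =>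
      hD.eq_of_forall_adjacent_of_prefers_iff hQ.left.ne
        (g := fun R => transfer φ i Q Q' a (Function.update X j R))
        (fun _ _ hadj h => hsp.transfer_update_eq_of_adjacent hQ X j hadj h) (hiff j)
  rw [hTT', transfer, hu.apply_update htop' rfl, hu.apply_update htop' htop.symm, sub_self]

end Transfer

section Support

variable [NeZero m] {D : Set (Pref m)} {φ : Profile D n → Lottery m}

lemma StrategyProof.apply_update_eq_of_adjacent_of_top_eq (hsp : StrategyProof φ)
    (hu : Unanimous φ) (hD : NoRestorationDomain D) (T : Profile D n) (i : Fin n) {Q Q' : D}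
    (hadj : Adjacent Q.1 Q'.1) (htop : topOf Q = topOf Q') :
    φ (Function.update T i Q) = φ (Function.update T i Q') := by
  obtain ⟨a, b, hQ⟩ := hadj.exists_flips
  have ha : transfer φ i Q Q' a T = 0 := hsp.transfer_eq_zero_of_top_eq hu hD hQ htop T
  have hb : transfer φ i Q Q' b T = 0 := by
    simpa [ha] using hsp.transfer_add_transfer (i := i) hQ T
  refine Subtype.ext (funext fun z => sub_eq_zero.1 (?_ : transfer φ i Q Q' z T = 0))
  rcases eq_or_ne z a with rfl | hza
  · exact ha
  rcases eq_or_ne z b with rfl | hzb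
  · exact hb
  exact hsp.transfer_eq_zero_of_ne hQ hza hzb T

lemma StrategyProof.apply_update_eq_of_adjacent_of_top_ne (hsp : StrategyProof φ)
    (hu : Unanimous φ) (hD : NoRestorationDomain D) (T : Profile D n) (i : Fin n) {R R' : D}
    (hadj : Adjacent R.1 R'.1) {c : Fin m} (hR : topOf R ≠ c) (hR' : topOf R' ≠ c) :
    (φ (Function.update T i R)).1 c = (φ (Function.update T i R')).1 c := by
  by_cases htop : topOf R = topOf R'
  · rw [hsp.apply_update_eq_of_adjacent_of_top_eq hu hD T i hadj htop]
  · obtain ⟨a, b, h⟩ := hadj.exists_flips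
    obtain ⟨rfl, rfl⟩ := h.eq_top_and_eq_top htop
    exact hsp.apply_update_eq_of_prefers_iff T i fun x => h.prefers_iff x c hR.symm hR'.symm

lemma StrategyProof.apply_eq_zero_of_notMem [NeZero n] (hsp : StrategyProof φ) (hu : Unanimous φ)
    (hD : NoRestorationDomain D) {S : Set (Fin m)} {u v : Fin m}
    (hS : ∀ R : D, topOf R ∈ S ↔ Prefers R.1 u v) {P : Profile D n} (hP : ∀ i, topOf (P i) ∈ S)
    {c : Fin m} (hc : c ∉ S) : (φ P).1 c = 0 := by
  have htop_ne {R : D} (h : topOf R ∈ S) : topOf R ≠ c := ne_of_mem_of_not_mem h hc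
  have hconst : (φ P).1 c = (φ fun _ => P 0).1 c :=
    eq_of_forall_update_eq (fun T => (φ T).1 c) P (fun _ => P 0) fun T j =>
      hD.eq_of_forall_adjacent_of_prefers (g := fun R => (φ (Function.update T j R)).1 c)
        (fun R R' hadj h h' => hsp.apply_update_eq_of_adjacent_of_top_ne hu hD T j hadj
          (htop_ne ((hS R).2 h)) (htop_ne ((hS R').2 h')))
        ((hS _).1 (hP j)) ((hS _).1 (hP 0))
  rw [hconst, hu _ (topOf (P 0)) fun _ => rfl]
  exact if_neg (htop_ne (hP 0)).symm

end Support

section SinglePeakedOn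

variable [NeZero m]

/-- Single-peakedness among the alternatives of `I`, the top being allowed to lie outside `I`:
on either side of the top, alternatives of `I` are better the closer they are to it. -/
def SinglePeakedOn (I : Set (Fin m)) (P : Pref m) : Prop :=
  ∀ r ∈ I, ∀ s ∈ I, ((r < s ∧ s < P 0) ∨ (P 0 < s ∧ s < r)) → Prefers P s r

lemma IsHybridPref.singlePeakedOn_Iic {p q : Fin m} {P : Pref m} (h : IsHybridPref p q P) :
    SinglePeakedOn (Set.Iic p) P :=
  fun r hr s hs => h.1 r s (Or.inl ⟨hr, hs⟩)

lemma IsHybridPref.singlePeakedOn_Ici {p q : Fin m} {P : Pref m} (h : IsHybridPref p q P) :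
    SinglePeakedOn (Set.Ici q) P :=
  fun r hr s hs => h.1 r s (Or.inr ⟨hr, hs⟩)

lemma SinglePeakedOn.le_top_iff_prefers {I : Set (Fin m)} {P : Pref m} (h : SinglePeakedOn I P)
    {v u : Fin m} (hv : v ∈ I) (hu : u ∈ I) (hvu : v ⋖ u) : u ≤ P 0 ↔ Prefers P u v := by
  constructor
  · intro hle
    rcases hle.eq_or_lt with rfl | hlt
    · exact prefers_top hvu.lt.ne
    · exact h v hv u hu (Or.inl ⟨hvu.lt, hlt⟩)
  · intro hpref
    by_contra! hlt
    refine hpref.asymm ?_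
    rcases (hvu.le_of_lt hlt).eq_or_lt with rfl | hlt'
    · exact prefers_top hvu.lt.ne'
    · exact h u hu v hv (Or.inr ⟨hlt', hvu.lt⟩)

lemma SinglePeakedOn.top_le_iff_prefers {I : Set (Fin m)} {P : Pref m} (h : SinglePeakedOn I P)
    {u v : Fin m} (hu : u ∈ I) (hv : v ∈ I) (huv : u ⋖ v) : P 0 ≤ u ↔ Prefers P u v := by
  rw [← not_prefers_iff huv.lt.ne', ← h.le_top_iff_prefers hu hv huv, not_le]
  exact ⟨fun hle => hle.trans_lt huv.lt, huv.le_of_lt⟩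

variable [NeZero n] {D : Set (Pref m)} {φ : Profile D n → Lottery m} {P : Profile D n}

lemma StrategyProof.apply_eq_zero_of_lt_of_le_top (hsp : StrategyProof φ) (hu : Unanimous φ)
    (hD : NoRestorationDomain D) {p : Fin m} (hL : ∀ R ∈ D, SinglePeakedOn (Set.Iic p) R)
    (hP : ∀ i, p ≤ topOf (P i)) {c : Fin m} (hc : c < p) : (φ P).1 c = 0 := by
  obtain ⟨w, -, hw⟩ := exists_le_covBy_of_lt hc
  exact hsp.apply_eq_zero_of_notMem hu hD (S := Set.Ici p)
    (fun R => (hL R.1 R.2).le_top_iff_prefers hw.le (Set.mem_Iic.2 le_rfl) hw) hP hc.not_ge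

lemma StrategyProof.apply_eq_zero_of_gt_of_top_le (hsp : StrategyProof φ) (hu : Unanimous φ)
    (hD : NoRestorationDomain D) {q : Fin m} (hR : ∀ R ∈ D, SinglePeakedOn (Set.Ici q) R)
    (hP : ∀ i, topOf (P i) ≤ q) {c : Fin m} (hc : q < c) : (φ P).1 c = 0 := by
  obtain ⟨w, hw, -⟩ := exists_covBy_le_of_lt hc
  exact hsp.apply_eq_zero_of_notMem hu hD (S := Set.Iic q)
    (fun R => (hR R.1 R.2).top_le_iff_prefers (Set.mem_Ici.2 le_rfl) hw.le hw) hP hc.not_ge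

end SinglePeakedOn

end PFBRPaper

theorem middle_probability_one_general {m n : ℕ} [NeZero m] [NeZero n] {D : Set (Pref m)}
    {p q : Fin m} (hD : NoRestorationDomain D) (hL : ∀ R ∈ D, SinglePeakedOn (Set.Iic p) R)
    (hR : ∀ R ∈ D, SinglePeakedOn (Set.Ici q) R) {φ : Profile D n → Lottery m}
    (hu : Unanimous φ) (hsp : StrategyProof φ) (P : Profile D n)
    (hP : ∀ i, p ≤ topOf (P i) ∧ topOf (P i) ≤ q) : (φ P).prob (midSet p q) = 1 := by
  refine (φ P).prob_eq_one_of_forall_notMem fun c hc => ?_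
  have hc' : c < p ∨ q < c := by
    simpa only [midSet, Finset.mem_filter_univ, not_and_or, not_le] using hc
  rcases hc' with hcp | hqc
  · exact hsp.apply_eq_zero_of_lt_of_le_top hu hD hL (fun i => (hP i).1) hcp
  · exact hsp.apply_eq_zero_of_gt_of_top_le hu hD hR (fun i => (hP i).2) hqc

/-- On a regular `(p,q)`-hybrid* domain with `q - p > 1`, a unanimous and
strategy-proof RSCF puts probability one on `M` whenever all voters' tops lie in `M`. -/
theorem middle_probability_one (m n : ℕ) [NeZero m] (hm : 3 ≤ m) (hn : 2 ≤ n)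
    (D : Set (Pref m)) (p q : Fin m) (hgap : (p : ℕ) + 1 < (q : ℕ))
    (hreg : RegularDomain D) (hstar : IsHybridStar D p q)
    (φ : Profile D n → Lottery m) (hu : Unanimous φ) (hsp : StrategyProof φ) :
    ∀ P : Profile D n, (∀ i, p ≤ topOf (P i) ∧ topOf (P i) ≤ q) →
      (φ P).prob (midSet p q) = 1 :=
  have : NeZero n := ⟨by lia⟩
  middle_probability_one_general hreg.2.2 (fun _ hR => (hstar.1 hR).singlePeakedOn_Iic)
    (fun _ hR => (hstar.1 hR).singlePeakedOn_Ici) hu hsp
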